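/- For every real α with 0 < α < 1/2, the sequence n ↦ α^n/d_n(α) converges to 0 as n → ∞. -/

import Mathlib

/-- `dpoly n α = ∑_{m=0}^{⌊n/2⌋} (-1)^m C(n-m, m) α^(2m)`. -/
noncomputable def dpoly (n : ℕ) (α : ℝ) : ℝ :=
  ∑ m ∈ Finset.range (n / 2 + 1), (-1 : ℝ) ^ m * (Nat.choose (n - m) m : ℝ) * α ^ (2 * m)

/-!
The sums `d n = dpoly n α` satisfy `d (n + 2) = d (n + 1) - α² * d n`. Write `a = |α| ≤ 1 / 2`.
Since `1 - a ≥ a`, as long as `d (n + 1) ≥ 0` this gives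
`d (n + 2) - a * d (n + 1) ≥ a * (d (n + 1) - a * d n)`. Hence `d (n + 1) ≥ a * d n + a ^ (n + 1)`
for all `n`, so `d n ≥ (n + 1) * a ^ n`, with equality at `a = 1 / 2`, and `|α ^ n / d n|` is at
most `1 / (n + 1)`.
-/

open Finset Filter Topology

theorem sum_antidiagonal_choose_mul_pow_add_two {R : Type*} [CommSemiring R] (x : R) (n : ℕ) :
    ∑ p ∈ antidiagonal (n + 2), (p.1.choose p.2 : R) * x ^ p.2 =
      ∑ p ∈ antidiagonal (n + 1), (p.1.choose p.2 : R) * x ^ p.2 +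
        x * ∑ p ∈ antidiagonal n, (p.1.choose p.2 : R) * x ^ p.2 := by
  rw [Nat.sum_antidiagonal_succ', Nat.sum_antidiagonal_succ, Nat.sum_antidiagonal_succ' (n := n)]
  simp only [Nat.choose_succ_succ, Nat.choose_zero_succ, Nat.choose_zero_right, Nat.cast_add,
    Nat.cast_zero, zero_mul, zero_add, add_mul, sum_add_distrib, mul_sum, pow_succ' x,
    mul_left_comm x]
  rw [add_assoc, add_comm (∑ p ∈ antidiagonal n, _)]

theorem dpoly_eq_sum_antidiagonal (n : ℕ) (α : ℝ) :
    dpoly n α = ∑ p ∈ antidiagonal n, (p.1.choose p.2 : ℝ) * (-α ^ 2) ^ p.2 := by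
  have hterm (m : ℕ) : (-1 : ℝ) ^ m * ((n - m).choose m : ℝ) * α ^ (2 * m) =
      ((n - m).choose m : ℝ) * (-α ^ 2) ^ m := by
    rw [neg_pow (α ^ 2), ← pow_mul]
    ring
  rw [← Nat.sum_antidiagonal_swap, Nat.sum_antidiagonal_eq_sum_range_succ_mk, dpoly,
    sum_congr rfl fun m _ ↦ hterm m]
  refine sum_subset (range_mono (by omega)) fun m _ hm ↦ ?_
  have hlt : n - m < m := by
    rw [mem_range] at hm
    omega
  rw [Nat.choose_eq_zero_of_lt hlt, Nat.cast_zero, zero_mul]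

theorem dpoly_zero (α : ℝ) : dpoly 0 α = 1 := by
  simp [dpoly]

theorem dpoly_one (α : ℝ) : dpoly 1 α = 1 := by
  simp [dpoly]

theorem dpoly_add_two (n : ℕ) (α : ℝ) :
    dpoly (n + 2) α = dpoly (n + 1) α - α ^ 2 * dpoly n α := by
  simp only [dpoly_eq_sum_antidiagonal]
  rw [sum_antidiagonal_choose_mul_pow_add_two, neg_mul, sub_eq_add_neg]

theorem dpoly_nonneg_and_abs_pow_succ_le_sub {α : ℝ} (hα : |α| ≤ 1 / 2) (n : ℕ) :
    0 ≤ dpoly n α ∧ |α| ^ (n + 1) ≤ dpoly (n + 1) α - |α| * dpoly n α := by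
  induction n with
  | zero =>
    rw [dpoly_zero, dpoly_one]
    exact ⟨zero_le_one, by rw [zero_add, pow_one, mul_one]; linarith⟩
  | succ n ih =>
    obtain ⟨hn, hgap⟩ := ih
    have hsucc : 0 ≤ dpoly (n + 1) α := by
      have : 0 ≤ |α| * dpoly n α := by positivity
      have : 0 ≤ |α| ^ (n + 1) := by positivity
      linarith
    refine ⟨hsucc, ?_⟩
    calc
      |α| ^ (n + 2) = |α| * |α| ^ (n + 1) := pow_succ' _ _
      _ ≤ |α| * (dpoly (n + 1) α - |α| * dpoly n α) := by gcongr
      _ = |α| * dpoly (n + 1) α - α ^ 2 * dpoly n α := by rw [← sq_abs]; ring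
      _ ≤ (1 - |α|) * dpoly (n + 1) α - α ^ 2 * dpoly n α := by gcongr; linarith
      _ = dpoly (n + 2) α - |α| * dpoly (n + 1) α := by rw [dpoly_add_two]; ring

theorem add_one_mul_abs_pow_le_dpoly {α : ℝ} (hα : |α| ≤ 1 / 2) (n : ℕ) :
    (n + 1) * |α| ^ n ≤ dpoly n α := by
  induction n with
  | zero => simp [dpoly_zero]
  | succ n ih =>
    calc
      ((n + 1 : ℕ) + 1) * |α| ^ (n + 1) = |α| * ((n + 1) * |α| ^ n) + |α| ^ (n + 1) := by
        push_cast
        ring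
      _ ≤ |α| * dpoly n α + (dpoly (n + 1) α - |α| * dpoly n α) := by
        gcongr
        exact (dpoly_nonneg_and_abs_pow_succ_le_sub hα n).2
      _ = dpoly (n + 1) α := add_sub_cancel _ _

theorem abs_pow_div_dpoly_le {α : ℝ} (hα : |α| ≤ 1 / 2) (n : ℕ) :
    |α ^ n / dpoly n α| ≤ 1 / ((n : ℝ) + 1) := by
  have hd : 0 ≤ dpoly n α := (dpoly_nonneg_and_abs_pow_succ_le_sub hα n).1
  rw [abs_div, abs_pow, abs_of_nonneg hd]
  refine div_le_of_le_mul₀ hd (by positivity) ?_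
  rw [one_div_mul_eq_div, le_div_iff₀' (by positivity)]
  exact add_one_mul_abs_pow_le_dpoly hα n

theorem stmt10_general {α : ℝ} (hα : |α| ≤ 1 / 2) :
    Tendsto (fun n : ℕ ↦ α ^ n / dpoly n α) atTop (𝓝 0) :=
  squeeze_zero_norm (abs_pow_div_dpoly_le hα) tendsto_one_div_add_atTop_nhds_zero_nat

theorem stmt10 (α : ℝ) (hα0 : 0 < α) (hα1 : α < 1 / 2) :
    Filter.Tendsto (fun n : ℕ => α ^ n / dpoly n α) Filter.atTop (nhds 0) :=
  stmt10_general ((abs_of_pos hα0).trans_le hα1.le)
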